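/- Let p be a prime and n ≥ 1, let G = Hr_p(ℤ/p^nℤ), and let Irr(G) be a complete set of pairwise non-isomorphic irreducible complex representations of G, with d_π the degree of π. Then (1/|G|) · Σ_{π ∈ Irr(G)} (d_π)³ = p − 1 + 1/p (an identity of rational numbers). -/

import Mathlib

/-- The Heisenberg group over a commutative unital ring `S`: the underlying set is
`S × S × S` with multiplication `(x,y,z)·(x',y',z') = (x+x', y+y', z+xy'+z')`. -/
@[ext]
structure Heis (S : Type*) [CommRing S] where
  x : S
  y : S
  z : S

namespace Heis

variable {S : Type*} [CommRing S]

instance : Mul (Heis S) := ⟨fun a b => ⟨a.x + b.x, a.y + b.y, a.z + a.x * b.y + b.z⟩⟩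
instance : One (Heis S) := ⟨⟨0, 0, 0⟩⟩
instance : Inv (Heis S) := ⟨fun a => ⟨-a.x, -a.y, a.x * a.y - a.z⟩⟩

@[simp] lemma mul_x (a b : Heis S) : (a * b).x = a.x + b.x := rfl
@[simp] lemma mul_y (a b : Heis S) : (a * b).y = a.y + b.y := rfl
@[simp] lemma mul_z (a b : Heis S) : (a * b).z = a.z + a.x * b.y + b.z := rfl
@[simp] lemma one_x : (1 : Heis S).x = 0 := rfl
@[simp] lemma one_y : (1 : Heis S).y = 0 := rfl
@[simp] lemma one_z : (1 : Heis S).z = 0 := rfl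
@[simp] lemma inv_x (a : Heis S) : a⁻¹.x = -a.x := rfl
@[simp] lemma inv_y (a : Heis S) : a⁻¹.y = -a.y := rfl
@[simp] lemma inv_z (a : Heis S) : a⁻¹.z = a.x * a.y - a.z := rfl

instance : Group (Heis S) where
  mul_assoc a b c := by ext <;> simp <;> ring
  one_mul a := by ext <;> simp
  mul_one a := by ext <;> simp
  inv_mul_cancel a := by ext <;> simp <;> ring

end Heis

/-- The central subgroup `{(0,0,ps) : s ∈ S}` of the Heisenberg group `H(S)`. -/
def pCenter (p : ℕ) (S : Type*) [CommRing S] : Subgroup (Heis S) where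
  carrier := {a | a.x = 0 ∧ a.y = 0 ∧ ∃ s : S, a.z = p * s}
  mul_mem' := by
    rintro a b ⟨hax, hay, s, hs⟩ ⟨hbx, hby, t, ht⟩
    refine ⟨by rw [Heis.mul_x, hax, hbx, add_zero],
      by rw [Heis.mul_y, hay, hby, add_zero], s + t, ?_⟩
    rw [Heis.mul_z, hs, ht, hax]; ring
  one_mem' := ⟨rfl, rfl, 0, by simp⟩
  inv_mem' := by
    rintro a ⟨hax, hay, s, hs⟩
    exact ⟨by rw [Heis.inv_x, hax, neg_zero], by rw [Heis.inv_y, hay, neg_zero],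
      -s, by rw [Heis.inv_z, hax, hs]; ring⟩

instance pCenter.normal (p : ℕ) (S : Type*) [CommRing S] : (pCenter p S).Normal := by
  constructor
  intro n hn g
  obtain ⟨hx, hy, hz⟩ := hn
  have hgn : g * n * g⁻¹ = n := by ext <;> simp [hx, hy] <;> ring
  rw [hgn]; exact ⟨hx, hy, hz⟩

/-- The `p`-reduced Heisenberg group over `S`: the quotient of `H(S)` by the central
subgroup `{(0,0,ps) : s ∈ S}`. -/
abbrev HrP (p : ℕ) (S : Type*) [CommRing S] : Type _ := Heis S ⧸ pCenter p S

/-- The subgroup `{(0,0,s) : s ∈ S}` of `H(S)`. -/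
def zSubgroup (S : Type*) [CommRing S] : Subgroup (Heis S) where
  carrier := {a | a.x = 0 ∧ a.y = 0}
  mul_mem' := by
    rintro a b ⟨hax, hay⟩ ⟨hbx, hby⟩
    exact ⟨by rw [Heis.mul_x, hax, hbx, add_zero], by rw [Heis.mul_y, hay, hby, add_zero]⟩
  one_mem' := ⟨rfl, rfl⟩
  inv_mem' := by
    rintro a ⟨hax, hay⟩
    exact ⟨by rw [Heis.inv_x, hax, neg_zero], by rw [Heis.inv_y, hay, neg_zero]⟩

/-- The subgroup `K = {(0,0,[s]) : s ∈ S}` of the `p`-reduced Heisenberg group `Hr_p(S)`. -/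
def Ksub (p : ℕ) (S : Type*) [CommRing S] : Subgroup (HrP p S) :=
  (zSubgroup S).map (QuotientGroup.mk' (pCenter p S))

instance Ksub.normal (p : ℕ) (S : Type*) [CommRing S] : (Ksub p S).Normal := by
  constructor
  intro n hn g
  obtain ⟨a, ⟨hax, hay⟩, rfl⟩ := hn
  obtain ⟨b, rfl⟩ := QuotientGroup.mk'_surjective (pCenter p S) g
  refine ⟨b * a * b⁻¹, ⟨?_, ?_⟩, by simp⟩
  · simp [hax]
  · simp [hay]

open Module in
theorem IsSemisimpleRing.sum_finrank_sq_eq_finrank {k : Type*} [Field k] [IsAlgClosed k]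
    {R : Type*} [Ring R] [Algebra k R] [FiniteDimensional k R] [IsSemisimpleRing R]
    {ι : Type*} [Fintype ι] (V : ι → Type*) [∀ i, AddCommGroup (V i)] [∀ i, Module R (V i)]
    [∀ i, Module k (V i)] [∀ i, IsScalarTower k R (V i)]
    [∀ i, IsSimpleModule R (V i)] [∀ i, FiniteDimensional k (V i)]
    (hpairwise : ∀ i j, Nonempty (V i ≃ₗ[R] V j) → i = j)
    (hcomplete : ∀ S : Submodule R R, IsSimpleModule R S → ∃ i, Nonempty (S ≃ₗ[R] V i)) :
    ∑ i, finrank k (V i) ^ 2 = finrank k R := by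
  classical
  obtain ⟨m, S, e, hS⟩ := IsSemisimpleModule.exists_linearEquiv_fin_dfinsupp R R
  choose f hf using fun j => hcomplete (S j) (hS j)
  have g (j) : S j ≃ₗ[R] V (f j) := (hf j).some
  have e' : R ≃ₗ[R] (∀ j, S j) := e.trans DFinsupp.linearEquivFunOnFintype
  have hhom (i j) : Module.Finite k (S j →ₗ[R] V i) ∧
      finrank k (S j →ₗ[R] V i) = if f j = i then 1 else 0 := by
    by_cases h : f j = i
    · subst h
      have E : (S j →ₗ[R] V (f j)) ≃ₗ[k] k :=
        (LinearEquiv.congrLeft (V (f j)) k (g j)).trans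
          (LinearEquiv.ofBijective (Algebra.linearMap k (Module.End R (V (f j))))
            (IsSimpleModule.algebraMap_end_bijective_of_isAlgClosed k)).symm
      exact ⟨Module.Finite.equiv E.symm, by simp [E.finrank_eq]⟩
    · have : Subsingleton (S j →ₗ[R] V i) := by
        refine subsingleton_of_forall_eq 0 fun φ => ?_
        have := hS j
        refine φ.bijective_or_eq_zero.resolve_left fun hφ => h (hpairwise _ _ ?_)
        exact ⟨(g j).symm.trans (LinearEquiv.ofBijective φ hφ)⟩
      exact ⟨inferInstance, by simp [h, finrank_zero_of_subsingleton]⟩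
  have hdim (i) : finrank k (V i) = ∑ j, if f j = i then 1 else 0 := by
    have hfin (j) := (hhom i j).1
    rw [← (LinearMap.ringLmapEquivSelf R k (V i)).finrank_eq,
      (LinearEquiv.congrLeft (V i) k e').finrank_eq,
      ← (LinearMap.lsum R (fun j => S j) k (M := V i)).finrank_eq, finrank_pi_fintype]
    exact Finset.sum_congr rfl fun j _ => (hhom i j).2
  calc ∑ i, finrank k (V i) ^ 2
      = ∑ i, ∑ j, if f j = i then finrank k (V (f j)) else 0 := by
        refine Finset.sum_congr rfl fun i _ => ?_
        conv_lhs => rw [sq]; enter [1]; rw [hdim i]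
        rw [Finset.sum_mul]
        refine Finset.sum_congr rfl fun j _ => ?_
        split_ifs with h
        · rw [one_mul, h]
        · rw [zero_mul]
    _ = ∑ j, finrank k (V (f j)) := by
        rw [Finset.sum_comm]
        simp
    _ = ∑ j, finrank k (S j) :=
        Finset.sum_congr rfl fun j _ => ((g j).restrictScalars k).finrank_eq.symm
    _ = finrank k R := by
        rw [(e'.restrictScalars k).finrank_eq, finrank_pi_fintype]

namespace MonoidAlgebra

open Module

theorem exists_of_smul_eq_smul_of_mem_center {k : Type*} [Field k] [IsAlgClosed k]
    {G : Type*} [Group G]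
    {V : Type*} [AddCommGroup V] [Module (MonoidAlgebra k G) V] [Module k V]
    [IsScalarTower k (MonoidAlgebra k G) V] [IsSimpleModule (MonoidAlgebra k G) V]
    [FiniteDimensional k V] {g : G} (hg : g ∈ Subgroup.center G) :
    ∃ t : k, ∀ v : V, of k G g • v = t • v := by
  have hcomm (r : MonoidAlgebra k G) : of k G g * r = r * of k G g := by
    induction r using MonoidAlgebra.induction_on with
    | of h => rw [← map_mul, ← map_mul, Subgroup.mem_center_iff.mp hg h]
    | add a b ha hb => rw [mul_add, add_mul, ha, hb]
    | smul c a ha => rw [mul_smul_comm, smul_mul_assoc, ha]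
  let φ : V →ₗ[MonoidAlgebra k G] V :=
    { toFun := fun v => of k G g • v
      map_add' := fun v w => smul_add _ v w
      map_smul' := fun r v => by
        rw [RingHom.id_apply, ← mul_smul, ← mul_smul, hcomm] }
  obtain ⟨t, ht⟩ := (IsSimpleModule.algebraMap_end_bijective_of_isAlgClosed k).2 φ
  exact ⟨t, fun v => (LinearMap.congr_fun ht v).symm⟩

/-- A nonzero subspace of a simple module that is stable under the monoid is everything. -/
theorem eq_top_of_of_smul_mem {k : Type*} [Field k] {G : Type*} [Monoid G]
    {V : Type*} [AddCommGroup V] [Module (MonoidAlgebra k G) V] [Module k V]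
    [IsScalarTower k (MonoidAlgebra k G) V] [IsSimpleModule (MonoidAlgebra k G) V]
    (W : Submodule k V) (hW : ∀ g, ∀ v ∈ W, of k G g • v ∈ W) (hne : W ≠ ⊥) : W = ⊤ := by
  let W' : Submodule (MonoidAlgebra k G) V :=
    { W with
      smul_mem' := fun r v hv => by
        change r • v ∈ W
        induction r using MonoidAlgebra.induction_on with
        | of h => exact hW h v hv
        | add a b ha hb => rw [add_smul]; exact W.add_mem ha hb
        | smul c a ha => rw [smul_assoc]; exact W.smul_mem c ha }
  have hmem (v : V) : v ∈ W' ↔ v ∈ W := Iff.rfl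
  rcases eq_bot_or_eq_top W' with h | h
  · exact absurd ((Submodule.eq_bot_iff _).2 fun v hv => by
      rwa [← hmem, h, Submodule.mem_bot] at hv) hne
  · exact (Submodule.eq_top_iff'.2 fun v => by rw [← hmem, h]; trivial)

/-- Irreducible representations of a group generated by `x`, `y` and a central element `c` of
order dividing a prime `p` with `x * y = y * x * c` and `x ^ p` central. -/
theorem finrank_eq_one_or_eq_prime {k : Type*} [Field k] [IsAlgClosed k]
    {G : Type*} [Group G]
    {V : Type*} [AddCommGroup V] [Module (MonoidAlgebra k G) V] [Module k V]
    [IsScalarTower k (MonoidAlgebra k G) V] [IsSimpleModule (MonoidAlgebra k G) V]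
    [FiniteDimensional k V] {p : ℕ} (hp : p.Prime) {x y c : G}
    (hgen : ∀ g, ∃ a b d : ℕ, g = y ^ b * x ^ a * c ^ d)
    (hc : c ∈ Subgroup.center G) (hcp : c ^ p = 1) (hxp : x ^ p ∈ Subgroup.center G)
    (hxy : x * y = y * x * c) :
    finrank k V = 1 ∨ finrank k V = p := by
  have : Nontrivial V := IsSimpleModule.nontrivial (MonoidAlgebra k G) V
  obtain ⟨ζ, hζ⟩ := exists_of_smul_eq_smul_of_mem_center (k := k) (V := V) hc
  obtain ⟨τ, hτ⟩ := exists_of_smul_eq_smul_of_mem_center (k := k) (V := V) hxp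
  let T (g : G) : V →ₗ[k] V := Algebra.lsmul k k V (of k G g)
  have hT (g v) : T g v = of k G g • v := rfl
  have hTmul (g h v) : T (g * h) v = T g (T h v) := by
    simp only [hT, map_mul, mul_smul]
  have hT1 (v) : T 1 v = v := by rw [hT, map_one, one_smul]
  have hTpow (g : G) (n : ℕ) : T (g ^ n) = T g ^ n := by
    change Algebra.lsmul k k V (of k G (g ^ n)) = Algebra.lsmul k k V (of k G g) ^ n
    rw [map_pow, map_pow]
  have hTinj (g v) (h : T g v = 0) : v = 0 := by
    have := hTmul g⁻¹ g v
    rwa [h, map_zero, inv_mul_cancel, hT1] at this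
  obtain ⟨l, hl⟩ := Module.End.exists_eigenvalue (T y)
  obtain ⟨v, hv⟩ := hl.exists_hasEigenvector
  have hζp : ζ ^ p = 1 := by
    have h1 (n : ℕ) : T (c ^ n) v = ζ ^ n • v := by
      induction n with
      | zero => simp [hT1]
      | succ n ih => rw [pow_succ, hTmul, hT c, hζ, map_smul, ih, smul_smul, mul_comm, pow_succ]
    have h2 := h1 p
    rw [hcp, hT1] at h2
    have : (ζ ^ p - 1) • v = 0 := by rw [sub_smul, ← h2, one_smul, sub_self]
    exact sub_eq_zero.1 ((smul_eq_zero.1 this).resolve_right hv.2)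
  have hζ0 : ζ ≠ 0 := by
    rintro rfl
    rw [zero_pow hp.ne_zero] at hζp
    exact zero_ne_one hζp
  have hl0 : l ≠ 0 := by
    rintro rfl
    exact hv.2 (hTinj y v (by rw [hv.apply_eq_smul, zero_smul]))
  have hyx (w) : T y (T x w) = ζ⁻¹ • T x (T y w) := by
    rw [← hTmul x y, hxy, hTmul, hTmul, hT c, hζ, map_smul, map_smul, smul_smul,
      inv_mul_cancel₀ hζ0, one_smul]
  have hyv (i : ℕ) : T y ((T x ^ i) v) = (ζ⁻¹ ^ i * l) • (T x ^ i) v := by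
    induction i with
    | zero => simp [hv.apply_eq_smul]
    | succ i ih =>
      rw [pow_succ', Module.End.mul_apply, hyx, ih, map_smul, smul_smul]
      ring_nf
  have hstable (W : Submodule k V) (hWx : ∀ w ∈ W, T x w ∈ W) (hWy : ∀ w ∈ W, T y w ∈ W)
      (g : G) : ∀ w ∈ W, of k G g • w ∈ W := by
    have hpow {h : G} (hh : ∀ w ∈ W, T h w ∈ W) (n : ℕ) : ∀ w ∈ W, T (h ^ n) w ∈ W := by
      induction n with
      | zero => simp [hT1]
      | succ n ih => exact fun w hw => by rw [pow_succ, hTmul]; exact ih _ (hh _ hw)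
    intro w hw
    obtain ⟨a, b, d, rfl⟩ := hgen g
    rw [← hT, hTmul, hTmul]
    refine hpow hWy b _ (hpow hWx a _ (hpow (fun w hw => ?_) d _ hw))
    rw [hT, hζ]
    exact W.smul_mem _ hw
  by_cases h1 : ζ = 1
  · left
    have hy : End.eigenspace (T y) l = ⊤ := by
      refine eq_top_of_of_smul_mem (G := G) _ (hstable _ (fun w hw => ?_) (fun w hw => ?_)) hl
      · rw [End.mem_eigenspace_iff] at hw ⊢
        rw [hyx, hw, h1, inv_one, one_smul, map_smul]
      · rw [End.mem_eigenspace_iff.1 hw]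
        exact Submodule.smul_mem _ _ hw
    obtain ⟨m, hm⟩ := Module.End.exists_eigenvalue (T x)
    obtain ⟨w, hw⟩ := hm.exists_hasEigenvector
    have htop : Submodule.span k {w} = ⊤ := by
      refine eq_top_of_of_smul_mem (G := G) _ (hstable _ (fun u hu => ?_) (fun u hu => ?_))
        (by simpa using hw.2)
      · obtain ⟨a, rfl⟩ := Submodule.mem_span_singleton.1 hu
        rw [map_smul, hw.apply_eq_smul, smul_comm]
        exact Submodule.smul_mem _ _ hu
      · rw [End.mem_eigenspace_iff.1 (hy ▸ Submodule.mem_top : u ∈ End.eigenspace (T y) l)]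
        exact Submodule.smul_mem _ _ hu
    rw [← finrank_top, ← htop, finrank_span_singleton hw.2]
  · right
    have hord : orderOf ζ = p := by
      have := Fact.mk hp
      exact orderOf_eq_prime hζp h1
    let u : Fin p → V := fun i => (T x ^ (i : ℕ)) v
    have hu0 (i) : u i ≠ 0 := fun h => hv.2 (hTinj (x ^ (i : ℕ)) v (by rw [hTpow]; exact h))
    have hli : LinearIndependent k u := by
      refine Module.End.eigenvectors_linearIndependent' (T y)
        (fun i : Fin p => ζ⁻¹ ^ (i : ℕ) * l) (fun i j hij => ?_) u fun i =>
          ⟨Module.End.mem_eigenspace_iff.2 (hyv i), hu0 i⟩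
      have := mul_right_cancel₀ hl0 hij
      rw [inv_pow, inv_pow, inv_inj] at this
      exact Fin.ext (pow_injOn_Iio_orderOf (by simp [hord]) (by simp [hord]) this)
    have hsucc (i) : T x (u i) = (T x ^ ((i : ℕ) + 1)) v := by
      rw [pow_succ', Module.End.mul_apply]
    have htop : Submodule.span k (Set.range u) = ⊤ := by
      refine eq_top_of_of_smul_mem (G := G) _ (hstable _ ?_ ?_) ?_
      · refine fun w hw => (Submodule.map_span_le (T x) _ _).2 ?_ (Submodule.mem_map_of_mem hw)
        rintro _ ⟨i, rfl⟩
        rw [hsucc]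
        rcases (Nat.succ_le_of_lt i.2).lt_or_eq with h | h
        · exact Submodule.subset_span ⟨⟨i + 1, h⟩, rfl⟩
        · rw [show (i : ℕ) + 1 = p from h, ← hTpow, hT, hτ]
          exact Submodule.smul_mem _ _ (Submodule.subset_span ⟨⟨0, hp.pos⟩, by simp [u]⟩)
      · refine fun w hw => (Submodule.map_span_le (T y) _ _).2 ?_ (Submodule.mem_map_of_mem hw)
        rintro _ ⟨i, rfl⟩
        rw [hyv]
        exact Submodule.smul_mem _ _ (Submodule.subset_span ⟨i, rfl⟩)
      · intro h
        exact hu0 ⟨0, hp.pos⟩ (Submodule.span_eq_bot.1 h _ ⟨_, rfl⟩)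
    rw [← finrank_top, ← htop, finrank_span_eq_card hli, Fintype.card_fin]

end MonoidAlgebra

open Module in
/-- Modules of dimension one over the base field correspond to characters of the algebra. -/
theorem Module.card_finrank_eq_one_eq_card_algHom {k : Type*} [Field k] {R : Type*} [Ring R]
    [Algebra k R] {ι : Type*} (V : ι → Type*) [∀ i, AddCommGroup (V i)] [∀ i, Module R (V i)]
    [∀ i, Module k (V i)] [∀ i, IsScalarTower k R (V i)]
    (hpairwise : ∀ i j, Nonempty (V i ≃ₗ[R] V j) → i = j)
    (hcomplete : ∀ χ : R →ₐ[k] k, ∃ i, finrank k (V i) = 1 ∧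
      ∀ (r : R) (v : V i), r • v = χ r • v) :
    Nat.card {i // finrank k (V i) = 1} = Nat.card (R →ₐ[k] k) := by
  choose f hf1 hf using hcomplete
  refine (Nat.card_congr (Equiv.ofBijective (fun χ => ⟨f χ, hf1 χ⟩) ⟨fun χ ψ h => ?_, ?_⟩)).symm
  · have h' : f χ = f ψ := congrArg Subtype.val h
    have : Nontrivial (V (f χ)) := nontrivial_of_finrank_eq_succ (hf1 χ)
    obtain ⟨v, hv⟩ := exists_ne (0 : V (f χ))
    have hψ : ∀ (r : R) (v : V (f χ)), r • v = ψ r • v := h' ▸ hf ψ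
    exact AlgHom.ext fun r => smul_left_injective k hv ((hf χ r v).symm.trans (hψ r v))
  · rintro ⟨i, hi⟩
    have := Module.finite_of_finrank_eq_succ hi
    have hbij : Function.Bijective (algebraMap k (End k (V i))) := by
      rw [← Algebra.finrank_eq_one_iff_bijective_algebraMap]
      exact (finrank_linearMap k k (V i) (V i)).trans (by rw [hi])
    let χ : R →ₐ[k] k := ((AlgEquiv.ofBijective (Algebra.ofId k (End k (V i))) hbij).symm :
      End k (V i) →ₐ[k] k).comp (Algebra.lsmul k k (V i))
    have hχ (r : R) (v : V i) : r • v = χ r • v := by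
      have := (AlgEquiv.ofBijective (Algebra.ofId k (End k (V i))) hbij).apply_symm_apply
        (Algebra.lsmul k k (V i) r)
      exact (LinearMap.congr_fun this v).symm
    refine ⟨χ, Subtype.ext (hpairwise _ _ ⟨?_⟩)⟩
    have := Module.finite_of_finrank_eq_succ (hf1 χ)
    let e : V (f χ) ≃ₗ[k] V i := LinearEquiv.ofFinrankEq _ _ ((hf1 χ).trans hi.symm)
    have he (r : R) (v : V (f χ)) : e (r • v) = r • e v := by rw [hf, hχ, map_smul]
    exact { e with map_smul' := he }

/-- A character of a `k`-algebra makes `k` a one-dimensional simple module. -/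
theorem AlgHom.exists_finrank_eq_one_of_complete {k R : Type} [Field k] [Ring R]
    [Algebra k R] {ι : Type*} (V : ι → Type*) [∀ i, AddCommGroup (V i)] [∀ i, Module R (V i)]
    [∀ i, Module k (V i)] [∀ i, IsScalarTower k R (V i)]
    (hcomplete : ∀ (W : Type) [AddCommGroup W] [Module R W] [Module k W] [IsScalarTower k R W],
      IsSimpleModule R W → FiniteDimensional k W → ∃ i : ι, Nonempty (W ≃ₗ[R] V i))
    (χ : R →ₐ[k] k) :
    ∃ i, Module.finrank k (V i) = 1 ∧ ∀ (r : R) (v : V i), r • v = χ r • v := by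
  let : Module R k := Module.compHom k χ.toRingHom
  have hsmul (r : R) (a : k) : r • a = χ r * a := rfl
  have : IsScalarTower k R k := ⟨fun c r a => by
    rw [hsmul, hsmul, map_smul, smul_eq_mul, smul_eq_mul, mul_assoc]⟩
  have hs : IsSimpleModule R k := isSimpleModule_iff _ _ |>.2 <|
    is_simple_module_of_finrank_eq_one (K := k) (Module.finrank_self k)
  obtain ⟨i, ⟨e⟩⟩ := hcomplete k hs inferInstance
  refine ⟨i, by rw [← (e.restrictScalars k).finrank_eq, Module.finrank_self], fun r v => ?_⟩
  obtain ⟨a, rfl⟩ := e.surjective v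
  rw [← map_smul, hsmul, ← smul_eq_mul]
  exact (e.restrictScalars k).map_smul (χ r) a

namespace Heis

variable {S : Type*} [CommRing S]

theorem pow_mk_x (n : ℕ) : (⟨1, 0, 0⟩ : Heis S) ^ n = ⟨n, 0, 0⟩ := by
  induction n with
  | zero => ext <;> simp
  | succ n ih => rw [pow_succ, ih]; ext <;> simp

theorem pow_mk_y (n : ℕ) : (⟨0, 1, 0⟩ : Heis S) ^ n = ⟨0, n, 0⟩ := by
  induction n with
  | zero => ext <;> simp
  | succ n ih => rw [pow_succ, ih]; ext <;> simp

theorem pow_mk_z (n : ℕ) : (⟨0, 0, 1⟩ : Heis S) ^ n = ⟨0, 0, n⟩ := by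
  induction n with
  | zero => ext <;> simp
  | succ n ih => rw [pow_succ, ih]; ext <;> simp

theorem card_eq [Finite S] : Nat.card (Heis S) = Nat.card S ^ 3 := by
  rw [Nat.card_congr (⟨fun a => (a.x, a.y, a.z), fun a => ⟨a.1, a.2.1, a.2.2⟩, fun _ => rfl,
    fun _ => rfl⟩ : Heis S ≃ S × S × S), Nat.card_prod, Nat.card_prod]
  ring

instance [Finite S] : Finite (Heis S) :=
  Finite.of_injective (fun a => (a.x, a.y, a.z)) fun a b h => by
    simp only [Prod.mk.injEq] at h
    exact Heis.ext h.1 h.2.1 h.2.2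

theorem monoidHom_apply {M : Type*} [CommMonoid M] (χ : Heis S →* M) (x y z : S) :
    χ ⟨x, y, z⟩ = χ ⟨x, y, 0⟩ := by
  have hxy : (⟨1, 0, 0⟩ * ⟨0, z, 0⟩ : Heis S) = ⟨0, z, 0⟩ * ⟨1, 0, 0⟩ * ⟨0, 0, z⟩ := by
    ext <;> simp
  have hz : χ ⟨0, 0, z⟩ = 1 := by
    have h := congrArg χ hxy
    rw [map_mul, map_mul, map_mul, mul_comm (χ ⟨1, 0, 0⟩)] at h
    have hu := ((Group.isUnit (⟨0, z, 0⟩ : Heis S)).map χ).mul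
      ((Group.isUnit (⟨1, 0, 0⟩ : Heis S)).map χ)
    exact (hu.mul_left_cancel (by rw [mul_one]; exact h)).symm
  have hmul : (⟨x, y, z⟩ : Heis S) = ⟨x, y, 0⟩ * ⟨0, 0, z⟩ := by ext <;> simp
  rw [hmul, map_mul, hz, mul_one]

end Heis

namespace HrP

variable {p : ℕ} {S : Type*} [CommRing S]

theorem card_monoidHom [Finite S] : Nat.card (HrP p S →* ℂ) = Nat.card S ^ 2 := by
  have hcard : Nat.card (AddChar (S × S) ℂ) = Nat.card S ^ 2 := by
    have := Fintype.ofFinite S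
    rw [Nat.card_eq_fintype_card, AddChar.card_eq, ← Nat.card_eq_fintype_card, Nat.card_prod, sq]
  rw [← hcard]
  let mk : Heis S →* HrP p S := QuotientGroup.mk' (pCenter p S)
  let F (χ : HrP p S →* ℂ) : AddChar (S × S) ℂ :=
    { toFun := fun a => χ.comp mk ⟨a.1, a.2, 0⟩
      map_zero_eq_one' := map_one (χ.comp mk)
      map_add_eq_mul' := fun a b => by
        rw [← map_mul, ← Heis.monoidHom_apply _ _ _ (a.1 * b.2)]
        congr 1
        ext <;> simp }
  refine Nat.card_congr (Equiv.ofBijective F ⟨fun χ ψ h => ?_, fun ψ => ?_⟩)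
  · refine QuotientGroup.monoidHom_ext _ (MonoidHom.ext fun a => ?_)
    exact (Heis.monoidHom_apply (χ.comp mk) a.x a.y a.z).trans <|
      (DFunLike.congr_fun h (a.x, a.y)).trans
        (Heis.monoidHom_apply (ψ.comp mk) a.x a.y a.z).symm
  · let θ : Heis S →* ℂ :=
      { toFun := fun a => ψ (a.x, a.y)
        map_one' := ψ.map_zero_eq_one
        map_mul' := fun a b => ψ.map_add_eq_mul (a.x, a.y) (b.x, b.y) }
    have hθ : pCenter p S ≤ θ.ker := fun a ha => by
      change ψ (a.x, a.y) = 1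
      rw [ha.1, ha.2.1]
      exact ψ.map_zero_eq_one
    exact ⟨QuotientGroup.lift _ θ hθ, rfl⟩

theorem card_eq {p n : ℕ} (hp : p.Prime) (hn : 1 ≤ n) :
    Nat.card (HrP p (ZMod (p ^ n))) = p ^ (2 * n + 1) := by
  have hdvd : p ∣ p ^ n := dvd_pow_self p (by lia)
  have : NeZero p := ⟨hp.ne_zero⟩
  let c := ZMod.castHom hdvd (ZMod p)
  have hc (z : ZMod (p ^ n)) : c z = 0 ↔ ∃ s, z = p * s := by
    refine ⟨fun h => ?_, fun ⟨s, hs⟩ => by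
      rw [hs, map_mul, map_natCast, CharP.cast_eq_zero, zero_mul]⟩
    rw [← ZMod.natCast_zmod_val z, map_natCast, ZMod.natCast_eq_zero_iff] at h
    obtain ⟨s, hs⟩ := h
    exact ⟨s, by rw [← ZMod.natCast_zmod_val z, hs, Nat.cast_mul]⟩
  let F (a : Heis (ZMod (p ^ n))) : ZMod (p ^ n) × ZMod (p ^ n) × ZMod p := (a.x, a.y, c a.z)
  have hF (a b) : a⁻¹ * b ∈ pCenter p (ZMod (p ^ n)) ↔ F a = F b := by
    change (-a.x + b.x = 0 ∧ -a.y + b.y = 0 ∧ ∃ s, a.x * a.y - a.z + -a.x * b.y + b.z = p * s) ↔ _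
    rw [← hc, neg_add_eq_zero, neg_add_eq_zero, Prod.mk.injEq, Prod.mk.injEq]
    refine and_congr_right fun _ => and_congr_right fun hy => ?_
    rw [hy, show a.x * b.y - a.z + -a.x * b.y + b.z = b.z - a.z by ring, map_sub, sub_eq_zero,
      eq_comm]
  let F' : HrP p (ZMod (p ^ n)) → ZMod (p ^ n) × ZMod (p ^ n) × ZMod p :=
    Quotient.lift F fun a b h => (hF a b).1 (QuotientGroup.leftRel_apply.1 h)
  have hF' : Function.Bijective F' := by
    refine ⟨fun a b => ?_, fun ⟨x, y, z⟩ => ?_⟩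
    · induction a using QuotientGroup.induction_on
      induction b using QuotientGroup.induction_on
      exact fun h => QuotientGroup.eq.2 ((hF _ _).2 h)
    · obtain ⟨z, rfl⟩ := ZMod.castHom_surjective hdvd z
      exact ⟨QuotientGroup.mk ⟨x, y, z⟩, rfl⟩
  rw [Nat.card_congr (Equiv.ofBijective F' hF'), Nat.card_prod, Nat.card_prod, Nat.card_zmod,
    Nat.card_zmod]
  ring

theorem finrank_eq_one_or_eq_prime {p m : ℕ} [NeZero m] (hp : p.Prime) {k : Type*} [Field k]
    [IsAlgClosed k] {V : Type*} [AddCommGroup V] [Module (MonoidAlgebra k (HrP p (ZMod m))) V]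
    [Module k V] [IsScalarTower k (MonoidAlgebra k (HrP p (ZMod m))) V]
    [IsSimpleModule (MonoidAlgebra k (HrP p (ZMod m))) V] [FiniteDimensional k V] :
    Module.finrank k V = 1 ∨ Module.finrank k V = p := by
  let mk : Heis (ZMod m) →* HrP p (ZMod m) := QuotientGroup.mk' (pCenter p (ZMod m))
  have hmk : Function.Surjective mk := QuotientGroup.mk'_surjective _
  refine MonoidAlgebra.finrank_eq_one_or_eq_prime (k := k) (V := V) hp (x := mk ⟨1, 0, 0⟩)
    (y := mk ⟨0, 1, 0⟩) (c := mk ⟨0, 0, 1⟩) (fun g => ?_) ?_ ?_ ?_ ?_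
  · obtain ⟨⟨x, y, z⟩, rfl⟩ := hmk g
    refine ⟨x.val, y.val, z.val, ?_⟩
    rw [← map_pow, ← map_pow, ← map_pow, Heis.pow_mk_x, Heis.pow_mk_y, Heis.pow_mk_z, ← map_mul,
      ← map_mul]
    congr 1
    ext <;> simp
  · refine Subgroup.mem_center_iff.2 fun g => ?_
    obtain ⟨a, rfl⟩ := hmk g
    rw [← map_mul, ← map_mul]
    congr 1
    ext <;> simp [add_comm]
  · rw [← map_pow, Heis.pow_mk_z]
    exact (QuotientGroup.eq_one_iff _).2 ⟨rfl, rfl, 1, (mul_one _).symm⟩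
  · refine Subgroup.mem_center_iff.2 fun g => ?_
    obtain ⟨a, rfl⟩ := hmk g
    rw [← map_pow, Heis.pow_mk_x, ← map_mul, ← map_mul]
    refine QuotientGroup.eq.2 ⟨?_, ?_, a.y, ?_⟩ <;> simp <;> ring
  · rw [← map_mul, ← map_mul, ← map_mul]
    congr 1
    ext <;> simp

end HrP

/-- For `G = Hr_p(ℤ/p^nℤ)` (`n ≥ 1`) and any complete set `(V i)_{i : ι}` of
pairwise non-isomorphic irreducible complex representations of `G`,
`(1/|G|) · Σ_i (dim V i)³ = p − 1 + 1/p` as rational numbers. -/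
theorem HrP_ZModPow_amenability_constant
    (p : ℕ) (hp : p.Prime) (n : ℕ) (hn : 1 ≤ n)
    (ι : Type*) [Fintype ι]
    (V : ι → Type*) [∀ i, AddCommGroup (V i)]
    [∀ i, Module (MonoidAlgebra ℂ (HrP p (ZMod (p ^ n)))) (V i)]
    [∀ i, Module ℂ (V i)]
    [∀ i, IsScalarTower ℂ (MonoidAlgebra ℂ (HrP p (ZMod (p ^ n)))) (V i)]
    (hsimple : ∀ i, IsSimpleModule (MonoidAlgebra ℂ (HrP p (ZMod (p ^ n)))) (V i))
    (hfd : ∀ i, FiniteDimensional ℂ (V i))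
    (hpairwise : ∀ i j : ι,
      Nonempty (V i ≃ₗ[MonoidAlgebra ℂ (HrP p (ZMod (p ^ n)))] V j) → i = j)
    (hcomplete : ∀ (W : Type) [AddCommGroup W]
      [Module (MonoidAlgebra ℂ (HrP p (ZMod (p ^ n)))) W]
      [Module ℂ W] [IsScalarTower ℂ (MonoidAlgebra ℂ (HrP p (ZMod (p ^ n)))) W],
      IsSimpleModule (MonoidAlgebra ℂ (HrP p (ZMod (p ^ n)))) W → FiniteDimensional ℂ W →
        ∃ i : ι, Nonempty (W ≃ₗ[MonoidAlgebra ℂ (HrP p (ZMod (p ^ n)))] V i)) :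
    (1 / (Nat.card (HrP p (ZMod (p ^ n))) : ℚ)) *
        ∑ i : ι, (Module.finrank ℂ (V i) : ℚ) ^ 3 =
      (p : ℚ) - 1 + 1 / (p : ℚ) := by
  classical
  set G := HrP p (ZMod (p ^ n))
  have : NeZero p := ⟨hp.ne_zero⟩
  have : Finite G := Nat.finite_of_card_ne_zero (by
    rw [HrP.card_eq hp hn]
    exact pow_ne_zero _ hp.ne_zero)
  have hsq : ∑ i, Module.finrank ℂ (V i) ^ 2 = p ^ (2 * n + 1) := by
    rw [IsSemisimpleRing.sum_finrank_sq_eq_finrank (R := MonoidAlgebra ℂ G) V hpairwise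
      fun S hS => hcomplete S hS inferInstance]
    have := Fintype.ofFinite G
    rw [(MonoidAlgebra.coeffLinearEquiv ℂ).finrank_eq, Module.finrank_finsupp_self,
      ← Nat.card_eq_fintype_card, HrP.card_eq hp hn]
  have hone : (Finset.univ.filter fun i => Module.finrank ℂ (V i) = 1).card = p ^ (2 * n) := by
    rw [← Fintype.card_subtype, ← Nat.card_eq_fintype_card,
      Module.card_finrank_eq_one_eq_card_algHom (R := MonoidAlgebra ℂ G) V hpairwise
        (AlgHom.exists_finrank_eq_one_of_complete V hcomplete),
      ← Nat.card_congr (MonoidAlgebra.lift ℂ ℂ G), HrP.card_monoidHom, Nat.card_zmod, ← pow_mul,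
      mul_comm]
  have hdeg (i) : (Module.finrank ℂ (V i) : ℚ) ^ 3 =
      p * (Module.finrank ℂ (V i) : ℚ) ^ 2 -
        (p - 1) * if Module.finrank ℂ (V i) = 1 then 1 else 0 := by
    split_ifs with h
    · rw [h]; push_cast; ring
    · rw [(HrP.finrank_eq_one_or_eq_prime (m := p ^ n) (k := ℂ) hp).resolve_left h]; ring
  have hsum : ∑ i, (Module.finrank ℂ (V i) : ℚ) ^ 3 =
      p * p ^ (2 * n + 1) - (p - 1) * p ^ (2 * n) := by
    rw [Finset.sum_congr rfl fun i _ => hdeg i, Finset.sum_sub_distrib, ← Finset.mul_sum,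
      ← Finset.mul_sum, Finset.sum_boole, hone]
    have := congrArg (Nat.cast : ℕ → ℚ) hsq
    push_cast at this ⊢
    rw [this]
  have hp0 : (p : ℚ) ≠ 0 := Nat.cast_ne_zero.2 hp.ne_zero
  rw [hsum, HrP.card_eq hp hn]
  push_cast
  field_simp
  ring
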